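/- arXiv:2111.04166 — 3 statements merged into one kernel-verified Lean document; each statement's English description precedes it below -/
import Mathlib

section
/- Let g(x), h(x) ∈ F_q[x] be coprime with g monic of degree 3 and deg h ≤ 2. Then for every integer n > 1, |𝓘(g, h, n, q)| = (1/n) ∑_{d ∣ n, 3 ∤ d} μ(d) |Ū(n/d, q)|, where μ is the Möbius function. -/
open Polynomial

/-- The transform `f_R` of a nonzero polynomial `f` by the rational expression `R = g/h`. -/
noncomputable def ratTransform {K : Type*} [Field K] (g h f : K[X]) : K[X] :=
  ∑ i ∈ Finset.range (f.natDegree + 1), C (f.coeff i) * g ^ i * h ^ (f.natDegree - i)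

/-- `𝓘(g,h,n,q)`: the set of monic irreducible polynomials `f` of degree `n` over the field
such that `f_R` is irreducible. -/
noncomputable def IrredSet {K : Type*} [Field K] (g h : K[X]) (n : ℕ) : Set K[X] :=
  {f | f.Monic ∧ Irreducible f ∧ f.natDegree = n ∧ Irreducible (ratTransform g h f)}

/-- `Ū(m,q)`: the set of `β` in the extension `E` (a field with `q^m` elements)
such that `g(x) − β h(x)` is irreducible over `E`. -/
noncomputable def Ubar {F : Type*} [Field F] (g h : F[X]) (E : Type*) [Field E]
    [Algebra F E] : Set E :=
  {β | Irreducible (g.map (algebraMap F E) - C β * h.map (algebraMap F E))}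

/-- A monic polynomial is irreducible iff its degree equals that of the minimal polynomial
of one of its roots. -/
lemma irr_iff_deg {K L : Type*} [Field K] [Field L] [Algebra K L] {p : K[X]} (hp : p.Monic)
    {x : L} (hx : aeval x p = 0) :
    Irreducible p ↔ (minpoly K x).natDegree = p.natDegree := by
  have hint : IsIntegral K x := ⟨p, hp, by simpa [aeval_def] using hx⟩
  constructor
  · intro hi
    rw [← minpoly.eq_of_irreducible_of_monic hi hx hp]
  · intro h
    have : minpoly K x = p :=
      (eq_of_monic_of_associated (minpoly.monic hint) hp
        (associated_of_dvd_of_natDegree_le (minpoly.dvd K x hx) hp.ne_zero h.ge))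
    rw [← this]
    exact minpoly.irreducible hint

/-- Degrees over finite fields through powers of Frobenius. -/
lemma deg_dvd_iff {K L : Type*} [Field K] [Finite K] [Field L] [Algebra K L] {x : L}
    (hx : IsIntegral K x) (j : ℕ) :
    (minpoly K x).natDegree ∣ j ↔ x ^ (Nat.card K) ^ j = x := by
  rw [(minpoly.irreducible hx).natDegree_dvd_iff_dvd_X_pow_card_pow_sub_X, minpoly.dvd_iff]
  simp [sub_eq_zero]

lemma ratTransform_monic {K : Type*} [Field K] {g h f : K[X]} (hg : g.Monic)
    (hgdeg : g.natDegree = 3) (hhdeg : h.natDegree ≤ 2) (hf : f.Monic) :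
    (ratTransform g h f).Monic ∧ (ratTransform g h f).natDegree = 3 * f.natDegree := by
  have hlow : (∑ i ∈ Finset.range f.natDegree,
      C (f.coeff i) * g ^ i * h ^ (f.natDegree - i)).degree < (g ^ f.natDegree).degree := by
    have hd : (g ^ f.natDegree).degree = ((3 * f.natDegree : ℕ) : WithBot ℕ) := by
      rw [degree_eq_natDegree (hg.pow _).ne_zero, hg.natDegree_pow, hgdeg, mul_comm]
    rw [hd]
    refine (degree_sum_le _ _).trans_lt ((Finset.sup_lt_iff (WithBot.bot_lt_coe _)).2 ?_)
    intro i hi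
    have hi' := Finset.mem_range.1 hi
    refine degree_le_natDegree.trans_lt ?_
    have h1 : (C (f.coeff i) * g ^ i * h ^ (f.natDegree - i)).natDegree
        ≤ 0 + i * 3 + (f.natDegree - i) * 2 := by
      refine natDegree_mul_le_of_le (natDegree_mul_le_of_le (by simp) ?_) ?_
      · exact natDegree_pow_le_of_le _ hgdeg.le
      · exact natDegree_pow_le_of_le _ hhdeg
    exact_mod_cast lt_of_le_of_lt h1 (by omega)
  have heq : ratTransform g h f = g ^ f.natDegree + ∑ i ∈ Finset.range f.natDegree,
      C (f.coeff i) * g ^ i * h ^ (f.natDegree - i) := by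
    rw [ratTransform, Finset.sum_range_succ, add_comm]
    simp [hf.coeff_natDegree]
  rw [heq]
  refine ⟨(hg.pow _).add_of_left hlow, ?_⟩
  rw [natDegree_add_eq_left_of_degree_lt hlow, hg.natDegree_pow, hgdeg, mul_comm]

lemma ratTransform_aeval {K L : Type*} [Field K] [Field L] [Algebra K L] {g h f : K[X]}
    {x b : L} (hb : aeval x g = b * aeval x h) (hf : aeval b f = 0) :
    aeval x (ratTransform g h f) = 0 := by
  have : aeval x (ratTransform g h f) = aeval x h ^ f.natDegree * aeval b f := by
    rw [ratTransform, map_sum, aeval_eq_sum_range (p := f) b, Finset.mul_sum]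
    refine Finset.sum_congr rfl fun i hi => ?_
    have hi' : i ≤ f.natDegree := by simpa [Nat.lt_succ_iff] using hi
    simp only [map_mul, map_pow, aeval_C, hb, Algebra.smul_def]
    conv_rhs => rw [← Nat.sub_add_cancel hi', pow_add]
    ring
  rw [this, hf, mul_zero]

/-- Arithmetic core. -/
lemma arith_core {a k m e : ℕ} (hm : 0 < m) (hk : k ∣ m) (hka : k ∣ a)
    (ha0 : 0 < a) (ha : a ≤ 3 * k) (he : ∀ j, e ∣ j ↔ a ∣ m * j) :
    e = 3 ↔ a = 3 * k ∧ ¬ 3 ∣ m / k := by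
  have hk0 : 0 < k := Nat.pos_of_dvd_of_pos hk hm
  obtain ⟨m', rfl⟩ := hk
  obtain ⟨a', rfl⟩ := hka
  have hm' : 0 < m' := Nat.pos_of_mul_pos_left hm
  have ha' : a' ≤ 3 := by
    rw [mul_comm] at ha
    exact Nat.le_of_mul_le_mul_right ha hk0
  have ha0' : 0 < a' := Nat.pos_of_mul_pos_left ha0
  rw [Nat.mul_div_cancel_left _ hk0]
  have he' : ∀ j, e ∣ j ↔ a' ∣ m' * j := by
    intro j
    rw [he, mul_assoc, Nat.mul_dvd_mul_iff_left hk0]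
  have h3 : k * a' = 3 * k ↔ a' = 3 := by
    rw [mul_comm 3 k]
    exact Nat.mul_right_inj hk0.ne'
  rw [h3]
  have hed : e ∣ a' := (he' _).2 (dvd_mul_left _ _)
  have hp3 : Nat.Prime 3 := by norm_num
  constructor
  · rintro rfl
    have h3a : a' = 3 := le_antisymm ha' (Nat.le_of_dvd ha0' hed)
    refine ⟨h3a, fun hd => ?_⟩
    have := (he' 1).2 (by rw [h3a, mul_one]; exact hd)
    omega
  · rintro ⟨rfl, hnd⟩
    rcases (Nat.dvd_prime hp3).1 hed with h1 | h1
    · exfalso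
      have := (he' 1).1 (by rw [h1])
      rw [mul_one] at this
      exact hnd this
    · exact h1

lemma key {F : Type*} [Field F] [Finite F] {g h : F[X]} (hg : g.Monic) (hgdeg : g.natDegree = 3)
    (hhdeg : h.natDegree ≤ 2) (hcop : IsCoprime g h)
    (E : Type*) [Field E] [Algebra F E] [Finite E] (β : E) :
    β ∈ Ubar g h E ↔ Irreducible (ratTransform g h (minpoly F β)) ∧
      ¬ 3 ∣ Module.finrank F E / (minpoly F β).natDegree := by
  have hfd : FiniteDimensional F E := inferInstance
  have hβ : IsIntegral F β := Algebra.IsIntegral.isIntegral β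
  set p : E[X] := g.map (algebraMap F E) - C β * h.map (algebraMap F E) with hp
  have hdegh : (C β * h.map (algebraMap F E)).degree < (g.map (algebraMap F E)).degree := by
    rw [degree_map, degree_eq_natDegree hg.ne_zero, hgdeg]
    refine degree_le_natDegree.trans_lt ?_
    have h1 : (C β * h.map (algebraMap F E)).natDegree ≤ 0 + 2 :=
      natDegree_mul_le_of_le (by simp) (natDegree_map_le.trans hhdeg)
    exact_mod_cast lt_of_le_of_lt h1 (by omega)
  have hpm : p.Monic := (hg.map _).sub_of_left hdegh
  have hpd : p.natDegree = 3 := by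
    have h1 : p.degree = _ := degree_sub_eq_left_of_degree_lt hdegh
    rw [natDegree_eq_of_degree_eq h1, natDegree_map, hgdeg]
  obtain ⟨α, hα⟩ := IsAlgClosed.exists_aeval_eq_zero (AlgebraicClosure E) p (by
    rw [degree_eq_natDegree hpm.ne_zero, hpd]; norm_num)
  set b : AlgebraicClosure E := algebraMap E (AlgebraicClosure E) β with hb
  have hgb : aeval α g = b * aeval α h := by
    simpa [hp, sub_eq_zero, aeval_map_algebraMap] using hα
  have hh0 : aeval α h ≠ 0 := by
    intro h0
    obtain ⟨u, v, huv⟩ := hcop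
    have := congrArg (aeval α) huv
    simp [hgb, h0] at this
  have hαE : IsIntegral E α := ⟨p, hpm, by simpa [aeval_def] using hα⟩
  have hαF : IsIntegral F α := isIntegral_trans (R := F) (A := E) α hαE
  have hmb : minpoly F b = minpoly F β :=
    minpoly.algebraMap_eq (algebraMap E (AlgebraicClosure E)).injective β
  have hbF : IsIntegral F b := hβ.map (IsScalarTower.toAlgHom F E (AlgebraicClosure E))
  have hT := ratTransform_monic hg hgdeg hhdeg (minpoly.monic hβ)
  have hTα : aeval α (ratTransform g h (minpoly F β)) = 0 :=
    ratTransform_aeval hgb (by rw [← hmb]; exact minpoly.aeval F b)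
  have hcard : Nat.card E = Nat.card F ^ Module.finrank F E := Module.natCard_eq_pow_finrank
  have hFrob : ∀ (j : ℕ) (P : F[X]), aeval α P ^ (Nat.card F) ^ j
      = aeval (α ^ (Nat.card F) ^ j) P := by
    intro j P
    have := Fintype.ofFinite F
    induction j with
    | zero => simp
    | succ j ih =>
      rw [pow_succ, pow_mul, ih, pow_mul, Nat.card_eq_fintype_card]
      exact (aeval_algHom_apply (FiniteField.frobeniusAlgHom F (AlgebraicClosure E)) _ P).symm
  change Irreducible p ↔ _
  rw [irr_iff_deg hpm hα, irr_iff_deg hT.1 hTα, hT.2, hpd]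
  refine arith_core Module.finrank_pos (minpoly.degree_dvd hβ) ?_ (minpoly.natDegree_pos hαF) ?_ ?_
  · rw [← hmb, deg_dvd_iff hbF]
    have h1 : α ^ (Nat.card F) ^ (minpoly F α).natDegree = α := (deg_dvd_iff hαF _).1 dvd_rfl
    have h2 := congrArg (· ^ (Nat.card F) ^ (minpoly F α).natDegree) hgb
    simp only [mul_pow, hFrob, h1] at h2
    rw [hgb] at h2
    exact (mul_right_cancel₀ hh0 h2).symm
  · rw [← hT.2]
    exact natDegree_le_of_dvd (minpoly.dvd F α hTα) hT.1.ne_zero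
  · intro j
    rw [deg_dvd_iff hαE, deg_dvd_iff hαF, hcard, pow_mul]

lemma roots_card {F : Type*} [Field F] [Finite F] (E : Type*) [Field E] [Algebra F E] [Fintype E]
    [DecidableEq F[X]] {f : F[X]} (hf : f.Monic) (hi : Irreducible f)
    (hd : f.natDegree ∣ Module.finrank F E) :
    (Finset.univ.filter (fun β : E => minpoly F β = f)).card = f.natDegree := by
  have hfd : FiniteDimensional F E := inferInstance
  have hcard : Nat.card E = Nat.card F ^ Module.finrank F E := Module.natCard_eq_pow_finrank
  have hdv := hi.natDegree_dvd_iff_dvd_X_pow_card_pow_sub_X.1 hd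
  have hs : Splits (f.map (algebraMap F E)) := by
    refine Splits.of_dvd (splits_X_pow_nat_card_sub_X (K := E)) ?_ ?_
    · exact FiniteField.X_pow_card_sub_X_ne_zero _ Finite.one_lt_card
    · rw [hcard]
      simpa using Polynomial.map_dvd (algebraMap F E) hdv
  rw [← card_rootSet_eq_natDegree (PerfectField.separable_of_irreducible hi) hs,
    ← Set.toFinset_card]
  congr 1
  ext β
  simp only [Finset.mem_filter, Finset.mem_univ, true_and, Set.mem_toFinset,
    mem_rootSet, hf.ne_zero, ne_eq, not_false_eq_true]
  constructor
  · rintro rfl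
    exact minpoly.aeval F β
  · intro h
    exact (minpoly.eq_of_irreducible_of_monic hi h hf).symm

open Classical in
lemma count {F : Type*} [Field F] [Finite F] {g h : F[X]} (hg : g.Monic) (hgdeg : g.natDegree = 3)
    (hhdeg : h.natDegree ≤ 2) (hcop : IsCoprime g h)
    (E : Type*) [Field E] [Algebra F E] [Fintype E] :
    (Ubar g h E).ncard = ∑ k ∈ (Module.finrank F E).divisors,
      if 3 ∣ Module.finrank F E / k then 0 else k * (IrredSet g h k).ncard := by
  have hfd : FiniteDimensional F E := inferInstance
  set m := Module.finrank F E with hm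
  have hm0 : m ≠ 0 := Module.finrank_pos.ne'
  rw [Set.ncard_eq_toFinset_card']
  rw [Finset.card_eq_sum_card_fiberwise (f := fun β => (minpoly F β).natDegree) (t := m.divisors)]
  swap
  · intro β _
    simp only [Finset.mem_coe, Nat.mem_divisors]
    exact ⟨minpoly.degree_dvd (Algebra.IsIntegral.isIntegral β), hm0⟩
  refine Finset.sum_congr rfl fun k hk => ?_
  have hkm := Nat.dvd_of_mem_divisors hk
  split_ifs with h3
  · rw [Finset.card_eq_zero, Finset.filter_eq_empty_iff]
    intro β hβ hkβ
    rw [Set.mem_toFinset, key hg hgdeg hhdeg hcop, hkβ] at hβ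
    exact hβ.2 h3
  · set S := (Ubar g h E).toFinset.filter (fun β => (minpoly F β).natDegree = k) with hS
    have hSmem : ∀ β, β ∈ S ↔ minpoly F β ∈ IrredSet g h k := by
      intro β
      have hint : IsIntegral F β := Algebra.IsIntegral.isIntegral β
      rw [hS, Finset.mem_filter, Set.mem_toFinset, key hg hgdeg hhdeg hcop]
      constructor
      · rintro ⟨⟨h1, h2⟩, h4⟩
        exact ⟨minpoly.monic hint, minpoly.irreducible hint, h4, h1⟩
      · rintro ⟨_, _, h4, h1⟩
        refine ⟨⟨h1, ?_⟩, h4⟩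
        rw [h4]
        exact h3
    have himg : IrredSet g h k = ((S.image (minpoly F) : Finset F[X]) : Set F[X]) := by
      ext f
      simp only [Finset.coe_image, Set.mem_image, Finset.mem_coe]
      constructor
      · intro hf
        have hc := roots_card E hf.1 hf.2.1 (by rw [hf.2.2.1]; exact hkm)
        have hpos : 0 < f.natDegree := hf.2.1.natDegree_pos
        rw [← hc, Finset.card_pos] at hpos
        obtain ⟨β, hβ⟩ := hpos
        rw [Finset.mem_filter] at hβ
        exact ⟨β, (hSmem β).2 (by rw [hβ.2]; exact hf), hβ.2⟩
      · rintro ⟨β, hβ, rfl⟩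
        exact (hSmem β).1 hβ
    rw [Finset.card_eq_sum_card_image (minpoly F) S, Finset.sum_congr rfl (g := fun _ => k),
      Finset.sum_const, himg, Set.ncard_coe_finset, smul_eq_mul, mul_comm]
    intro f hf
    have hf' : f ∈ IrredSet g h k := by rw [himg]; exact hf
    rw [← hf'.2.2.1] at hkm
    rw [← hf'.2.2.1, ← roots_card E hf'.1 hf'.2.1 hkm]
    congr 1
    ext β
    simp only [Finset.mem_filter, Finset.mem_univ, true_and, and_iff_right_iff_imp]
    rintro rfl
    exact (hSmem β).2 hf'

open ArithmeticFunction in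
lemma inversion (W B : ℕ → ℚ)
    (hW : ∀ m, 0 < m → W m = ∑ k ∈ m.divisors, if 3 ∣ m / k then 0 else B k) (n : ℕ)
    (hn : 0 < n) :
    ∑ d ∈ n.divisors.filter (fun d => ¬ 3 ∣ d), ((moebius d : ℤ) : ℚ) * W (n / d) = B n := by
  let W' : ArithmeticFunction ℚ := ⟨fun m => if m = 0 then 0 else W m, by simp⟩
  let B' : ArithmeticFunction ℚ := ⟨fun m => if m = 0 then 0 else B m, by simp⟩
  let c : ArithmeticFunction ℚ := ⟨fun m => if 3 ∣ m then 0 else 1, by simp⟩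
  let cm : ArithmeticFunction ℚ := ⟨fun m => if 3 ∣ m then 0 else ((moebius m : ℤ) : ℚ), by simp⟩
  have hp3 : Nat.Prime 3 := by norm_num
  have h1 : W' = c * B' := by
    ext m
    rcases Nat.eq_zero_or_pos m with rfl | hm
    · simp
    rw [mul_apply, Nat.sum_divisorsAntidiagonal' (f := fun x y => c x * B' y)]
    simp only [W', B', c, coe_mk, hm.ne', if_false]
    rw [hW m hm]
    refine Finset.sum_congr rfl fun k hk => ?_
    have : k ≠ 0 := (Nat.pos_of_mem_divisors hk).ne'
    simp [this]
  have h2 : cm * c = 1 := by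
    have hz : ((moebius : ArithmeticFunction ℤ) : ArithmeticFunction ℚ) * (zeta : ArithmeticFunction ℚ) = 1 :=
      coe_moebius_mul_coe_zeta
    ext m
    rcases Nat.eq_zero_or_pos m with rfl | hm
    · simp
    by_cases h3 : 3 ∣ m
    · rw [mul_apply, one_apply_ne (by rintro rfl; omega)]
      refine Finset.sum_eq_zero fun x hx => ?_
      have hx' := (Nat.mem_divisorsAntidiagonal.1 hx).1
      rw [← hx', hp3.dvd_mul] at h3
      rcases h3 with h3 | h3 <;> simp [cm, c, h3]
    · rw [← hz, mul_apply, mul_apply]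
      refine Finset.sum_congr rfl fun x hx => ?_
      have hx' := Nat.mem_divisorsAntidiagonal.1 hx
      rw [← hx'.1, hp3.dvd_mul, not_or] at h3
      have : x.2 ≠ 0 := by
        intro h0
        exact h3.2 (by rw [h0]; exact dvd_zero _)
      simp [cm, c, h3.1, h3.2, this, natCoe_apply, intCoe_apply, zeta_apply]
  have h3 : cm * W' = B' := by rw [h1, ← mul_assoc, h2, one_mul]
  have h4 := congrArg (fun f : ArithmeticFunction ℚ => f n) h3
  simp only [mul_apply] at h4
  rw [Nat.sum_divisorsAntidiagonal (f := fun x y => cm x * W' y)] at h4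
  simp only [cm, W', B', coe_mk, hn.ne', if_false] at h4
  rw [← h4, Finset.sum_filter]
  refine Finset.sum_congr rfl fun d hd => ?_
  have : n / d ≠ 0 := (Nat.div_pos (Nat.divisor_le hd) (Nat.pos_of_mem_divisors hd)).ne'
  by_cases h : 3 ∣ d <;> simp [h, this]

/-- Möbius inversion formula: `|𝓘(g,h,n,q)| = (1/n) ∑_{d ∣ n, 3 ∤ d} μ(d) |Ū(n/d,q)|`,
where `E m` is a field with `q^m` elements extending `F_q`. -/
theorem stmt3 {F : Type*} [Field F] [Fintype F] (q : ℕ) (hq : Fintype.card F = q)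
    (g h : F[X]) (hg : g.Monic) (hgdeg : g.natDegree = 3) (hhdeg : h.natDegree ≤ 2)
    (hcop : IsCoprime g h)
    (E : ℕ → Type*) [∀ m, Field (E m)] [∀ m, Algebra F (E m)] [∀ m, Fintype (E m)]
    (hE : ∀ m, 0 < m → Fintype.card (E m) = q ^ m)
    (n : ℕ) (hn : 1 < n) :
    ((IrredSet g h n).ncard : ℚ) =
      (1 / (n : ℚ)) * ∑ d ∈ n.divisors.filter (fun d => ¬ 3 ∣ d),
        ((ArithmeticFunction.moebius d : ℤ) : ℚ) * ((Ubar g h (E (n / d))).ncard : ℚ) := by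
  have hfin : ∀ m, 0 < m → Module.finrank F (E m) = m := by
    intro m hm
    have h1 := Module.card_eq_pow_finrank (K := F) (V := E m)
    rw [hE m hm, hq] at h1
    have hq1 : 1 < q := hq ▸ Fintype.one_lt_card
    exact (Nat.pow_right_injective hq1 h1).symm
  have hn0 : (n : ℚ) ≠ 0 := by
    have : n ≠ 0 := by omega
    exact_mod_cast this
  rw [inversion (fun m => ((Ubar g h (E m)).ncard : ℚ))
    (fun k => (k : ℚ) * ((IrredSet g h k).ncard : ℚ)) ?_ n (by omega)]
  · field_simp
  · intro m hm
    have := count hg hgdeg hhdeg hcop (E m)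
    rw [hfin m hm] at this
    simp only [this]
    push_cast
    rfl
end

section
/- Let q be a prime power not divisible by 3 and let n > 1 be an integer. If q ≡ 1 (mod 3), then |𝓘(x^3, 1, n, q)| = (2/(3 n_3)) (I(n/n_3, q^{n_3}) − I(n/n_3, 1)). If q ≡ −1 (mod 3), then |𝓘(x^3, 1, n, q)| = (1/(3 n_3)) (I(n/(2n_3), q^{2 n_3}) − I(n/(2n_3), 1)). -/
open Polynomial

/-- `I(n,q) = (1/n) ∑_{d ∣ n} μ(d) q^{n/d}`, used formally for any rational `q`. -/
noncomputable def Ifun (n : ℕ) (q : ℚ) : ℚ :=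
  (1 / (n : ℚ)) * ∑ d ∈ n.divisors, ((ArithmeticFunction.moebius d : ℤ) : ℚ) * q ^ (n / d)

/-- `I(n/m, q)` with the convention that it is `0` when `m` does not divide `n`
(i.e. when `n/m` is not a positive integer). -/
noncomputable def IfunD (n m : ℕ) (q : ℚ) : ℚ := if m ∣ n then Ifun (n / m) q else 0

/-- `n₃`: the largest power of `3` dividing `n`. -/
def nThree (n : ℕ) : ℕ := 3 ^ (n.factorization 3)

section Helpers

set_option linter.unusedSectionVars false

open scoped IntermediateField

variable {F : Type*} [Field F] [Fintype F] {K : Type*} [Field K] [Algebra F K] [IsAlgClosed K]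
  [Algebra.IsAlgebraic F K]

theorem pow_eq_self_iff_dvd (x : K) (n : ℕ) :
    x ^ (Fintype.card F ^ n) = x ↔ (minpoly F x).natDegree ∣ n := by
  have hx : IsIntegral F x := Algebra.IsIntegral.isIntegral x
  have h := (minpoly.irreducible hx).natDegree_dvd_iff_dvd_X_pow_card_pow_sub_X (n := n)
  rw [h, minpoly.dvd_iff, Nat.card_eq_fintype_card]
  simp [sub_eq_zero]

theorem ratTransform_eq (f : F[X]) : ratTransform (X ^ 3) 1 f = f.comp (X ^ 3) := by
  unfold ratTransform
  rw [comp, eval₂_eq_sum_range]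
  simp

theorem irr_comp_iff {f : F[X]} {n : ℕ} (hm : f.Monic) (hi : Irreducible f)
    (hn : f.natDegree = n) {a : K} (ha : aeval a f = 0) :
    Irreducible (f.comp (X ^ 3)) ↔ ∀ b : K, b ^ (Fintype.card F ^ n) = b → b ^ 3 ≠ a := by
  have hn0 : 0 < n := hn ▸ hi.natDegree_pos
  constructor
  · intro h b hb hba
    have h1 : aeval b (f.comp (X ^ 3)) = 0 := by
      rw [aeval_comp]; simpa [hba] using ha
    have h2 : minpoly F b = f.comp (X ^ 3) :=
      (minpoly.eq_of_irreducible_of_monic h h1 (hm.comp (monic_X_pow 3) (by simp))).symm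
    rw [pow_eq_self_iff_dvd, h2, natDegree_comp, hn, natDegree_X_pow] at hb
    have := Nat.le_of_dvd hn0 hb
    omega
  · intro h
    refine irreducible_comp hm (monic_X_pow 3) hi ?_
    intro E _ _ x hx
    have hxi : IsIntegral F x := by
      by_contra hc
      rw [minpoly.eq_zero hc] at hx
      exact hi.ne_zero hx.symm
    rw [Polynomial.map_pow, map_X]
    refine X_pow_sub_C_irreducible_of_prime Nat.prime_three ?_
    intro b hb
    have hfd : FiniteDimensional F F⟮x⟯ := IntermediateField.adjoin.finiteDimensional hxi
    let pb := IntermediateField.adjoin.powerBasis hxi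
    have hr : aeval a (minpoly F pb.gen) = 0 := by
      rw [IntermediateField.adjoin.powerBasis_gen, IntermediateField.minpoly_gen, hx, ha]
    let φ : F⟮x⟯ →ₐ[F] K := pb.lift a hr
    have hφ : φ (IntermediateField.AdjoinSimple.gen F x) = a := by
      have := pb.lift_gen a hr
      rwa [IntermediateField.adjoin.powerBasis_gen] at this
    refine h (φ b) ?_ ?_
    · rw [pow_eq_self_iff_dvd, minpoly.algHom_eq φ φ.injective, ← hn, ← hx,
        ← IntermediateField.adjoin.finrank hxi]
      exact minpoly.degree_dvd (Algebra.IsIntegral.isIntegral b)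
    · rw [← map_pow, hb, hφ]

theorem noncube_iff {Q : ℕ} (hQ : 1 < Q) (h3 : 3 ∣ Q - 1) (a : K) :
    (a ^ Q = a ∧ ∀ b : K, b ^ Q = b → b ^ 3 ≠ a) ↔
      (a ^ (Q - 1) = 1 ∧ a ^ ((Q - 1) / 3) ≠ 1) := by
  obtain ⟨k, hk⟩ := h3
  have hQk : Q = 3 * k + 1 := by omega
  subst hQk
  have key : ∀ x : K, x ^ (3 * k + 1) = x ↔ (x = 0 ∨ x ^ (3 * k) = 1) := by
    intro x
    rw [pow_succ]
    constructor
    · intro h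
      by_cases hx : x = 0
      · exact Or.inl hx
      · exact Or.inr (mul_right_cancel₀ hx (by rw [h, one_mul]))
    · rintro (h | h)
      · simp [h]
      · simp [h]
  simp only [Nat.add_sub_cancel]
  rw [Nat.mul_div_cancel_left k (by norm_num : 0 < 3)]
  simp only [key]
  constructor
  · rintro ⟨h1, h2⟩
    have ha : a ≠ 0 := by
      rintro rfl
      exact h2 0 (Or.inl rfl) (by simp)
    refine ⟨h1.resolve_left ha, fun h => ?_⟩
    obtain ⟨b, hb⟩ := IsAlgClosed.exists_pow_nat_eq a (n := 3) (by norm_num)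
    exact h2 b (Or.inr (by rw [pow_mul, hb, h])) hb
  · rintro ⟨h1, h2⟩
    refine ⟨Or.inr h1, fun b hb hba => h2 ?_⟩
    have hk0 : k ≠ 0 := by rintro rfl; simp at h2
    rw [← hba, ← pow_mul]
    rcases hb with hb | hb
    · exfalso
      subst hb
      rw [← hba] at h1
      simp [hk0] at h1
    · exact hb

/-- Noncubes of the subfield with `q^n` elements. -/
def SS (F K : Type*) [Field F] [Fintype F] [Field K] (n : ℕ) : Set K :=
  {a | a ^ (Fintype.card F ^ n - 1) = 1 ∧ a ^ ((Fintype.card F ^ n - 1) / 3) ≠ 1}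

/-- Noncubes of exact degree `n`. -/
def TT (F K : Type*) [Field F] [Fintype F] [Field K] [Algebra F K] (n : ℕ) : Set K :=
  {a | a ∈ SS F K n ∧ (minpoly F a).natDegree = n}

theorem mem_IrredSet_iff {n : ℕ} (hn : 0 < n) (h3 : 3 ∣ Fintype.card F ^ n - 1)
    {f : F[X]} (hm : f.Monic) (hi : Irreducible f) (hd : f.natDegree = n)
    {a : K} (ha : aeval a f = 0) : f ∈ IrredSet (X ^ 3 : F[X]) 1 n ↔ a ∈ TT F K n := by
  have hmin : minpoly F a = f := (minpoly.eq_of_irreducible_of_monic hi ha hm).symm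
  have hQ : 1 < Fintype.card F ^ n := Nat.one_lt_pow hn.ne' Fintype.one_lt_card
  have h1 : a ^ (Fintype.card F ^ n) = a := by
    rw [pow_eq_self_iff_dvd, hmin, hd]
  have h2 := noncube_iff hQ h3 a
  have h4 := irr_comp_iff hm hi hd ha
  simp only [IrredSet, TT, SS, Set.mem_ofPred_eq, ratTransform_eq, hmin, hd, hm, hi, true_and,
    and_true, h4, ← h2, h1]

theorem SS_finite {n : ℕ} (hn : 0 < n) : (SS F K n).Finite := by
  have hQ : 1 < Fintype.card F ^ n := Nat.one_lt_pow hn.ne' Fintype.one_lt_card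
  have h0 : 0 < Fintype.card F ^ n - 1 := by omega
  refine (Finset.finite_toSet (nthRootsFinset (Fintype.card F ^ n - 1) (1 : K))).subset ?_
  intro a ha
  simpa [mem_nthRootsFinset h0] using ha.1

theorem card_TT {n : ℕ} (hn : 0 < n) (h3 : 3 ∣ Fintype.card F ^ n - 1) :
    (TT F K n).ncard = n * (IrredSet (X ^ 3 : F[X]) 1 n).ncard := by
  classical
  have hfin : (TT F K n).Finite := (SS_finite hn).subset fun a ha => ha.1
  have himg : (minpoly F) '' (TT F K n) = IrredSet (X ^ 3 : F[X]) 1 n := by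
    ext f
    constructor
    · rintro ⟨a, ha, rfl⟩
      have hx : IsIntegral F a := Algebra.IsIntegral.isIntegral a
      exact (mem_IrredSet_iff hn h3 (minpoly.monic hx) (minpoly.irreducible hx) ha.2
        (minpoly.aeval F a)).2 ha
    · intro hf
      obtain ⟨hm, hi, hd, -⟩ := id hf
      obtain ⟨a, ha⟩ := IsAlgClosed.exists_aeval_eq_zero K f hi.degree_pos.ne'
      exact ⟨a, (mem_IrredSet_iff hn h3 hm hi hd ha).1 hf,
        (minpoly.eq_of_irreducible_of_monic hi ha hm).symm⟩
  rw [← himg, Set.ncard_eq_toFinset_card _ hfin,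
    Set.ncard_eq_toFinset_card _ (hfin.image _), hfin.toFinset_image,
    Finset.card_eq_sum_card_image (minpoly F), Finset.sum_const_nat (m := n), mul_comm]
  intro f hf
  rw [Finset.mem_image] at hf
  obtain ⟨a, ha, rfl⟩ := hf
  rw [Set.Finite.mem_toFinset] at ha
  have hx : IsIntegral F a := Algebra.IsIntegral.isIntegral a
  have hsep : (minpoly F a).Separable :=
    PerfectField.separable_of_irreducible (minpoly.irreducible hx)
  have hc := card_rootSet_eq_natDegree (K := K) hsep (IsAlgClosed.splits _)
  rw [ha.2] at hc
  refine Eq.trans ?_ hc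
  rw [← Set.toFinset_card]
  congr 1
  ext b
  simp only [Finset.mem_filter, Set.Finite.mem_toFinset, Set.mem_toFinset]
  rw [mem_rootSet_of_ne (minpoly.ne_zero hx)]
  constructor
  · rintro ⟨-, h⟩
    rw [← h]; exact minpoly.aeval F b
  · intro h
    refine ⟨?_, (minpoly.eq_of_irreducible_of_monic (minpoly.irreducible hx) h
      (minpoly.monic hx)).symm⟩
    rw [← mem_IrredSet_iff hn h3 (minpoly.monic hx) (minpoly.irreducible hx) ha.2 h]
    exact himg ▸ ⟨a, ha, rfl⟩

theorem card_nthRootsF {k : ℕ} (hk : (k : K) ≠ 0) : (nthRootsFinset k (1 : K)).card = k := by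
  have : NeZero (k : K) := ⟨hk⟩
  obtain ⟨z, hz⟩ := HasEnoughRootsOfUnity.exists_primitiveRoot K k
  exact hz.card_nthRootsFinset

theorem card_SS {n : ℕ} (hn : 0 < n) (h3 : 3 ∣ Fintype.card F ^ n - 1) :
    3 * (SS F K n).ncard = 2 * (Fintype.card F ^ n - 1) := by
  classical
  have hQ : 1 < Fintype.card F ^ n := Nat.one_lt_pow hn.ne' Fintype.one_lt_card
  have hcast : ((Fintype.card F ^ n - 1 : ℕ) : K) ≠ 0 := by
    rw [Nat.cast_sub hQ.le, Nat.cast_pow]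
    have : ((Fintype.card F : ℕ) : K) = 0 := by
      rw [← map_natCast (algebraMap F K), Nat.cast_card_eq_zero, map_zero]
    simp [this, hn.ne']
  obtain ⟨k, hk⟩ := h3
  have hk0 : 0 < k := by omega
  have hcast' : (k : K) ≠ 0 := by
    rw [hk] at hcast
    intro h
    simp [h] at hcast
  have : SS F K n = ((nthRootsFinset (3 * k) (1 : K) \ nthRootsFinset k (1 : K) : Finset K) : Set K) := by
    ext a
    simp [SS, hk, mem_nthRootsFinset (show 0 < 3 * k by omega), mem_nthRootsFinset hk0]
  rw [this, Set.ncard_coe_finset, Finset.card_sdiff_of_subset, card_nthRootsF hcast',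
    card_nthRootsF (hk ▸ hcast)]
  · omega
  · intro a ha
    rw [mem_nthRootsFinset hk0] at ha
    rw [mem_nthRootsFinset (by omega), mul_comm, pow_mul, ha, one_pow]

theorem three_dvd_aux {Q s : ℕ} (hQ : 0 < Q) (h3 : 3 ∣ Q - 1) :
    ∃ t, Q ^ s - 1 = (Q - 1) * t ∧ (3 ∣ t ↔ 3 ∣ s) := by
  obtain ⟨k, hk⟩ := h3
  have hQk : Q = 3 * k + 1 := by omega
  refine ⟨∑ i ∈ Finset.range s, Q ^ i, ?_, ?_⟩
  · obtain ⟨j, rfl⟩ : ∃ j, Q = j + 1 := ⟨3 * k, hQk⟩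
    have h := geom_sum_mul_add j s
    rw [Nat.add_sub_cancel, ← h, Nat.add_sub_cancel, mul_comm]
  · have h1 : (∑ i ∈ Finset.range s, Q ^ i) ≡ s [MOD 3] := by
      have : ∀ i ∈ Finset.range s, Q ^ i ≡ 1 [MOD 3] := by
        intro i _
        have : Q ≡ 1 [MOD 3] := by rw [hQk]; simp [Nat.ModEq, Nat.add_mod]
        simpa using this.pow i
      have h := Nat.ModEq.sum this
      simpa using h
    exact (h1.dvd_iff (dvd_refl 3))

theorem mem_SS_imp {n : ℕ} (hn : 0 < n) (h3 : 3 ∣ Fintype.card F ^ n - 1) {x : K}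
    (hx : x ∈ SS F K n) :
    (minpoly F x).natDegree ∣ n ∧ 3 ∣ Fintype.card F ^ (minpoly F x).natDegree - 1 ∧
      ¬ 3 ∣ n / (minpoly F x).natDegree ∧ x ∈ SS F K (minpoly F x).natDegree := by
  have hq1 : 1 < Fintype.card F := Fintype.one_lt_card
  obtain ⟨hx1, hx2⟩ := hx
  have hx0 : x ≠ 0 := by
    rintro rfl
    have hQ : 1 < Fintype.card F ^ n := Nat.one_lt_pow hn.ne' hq1
    rw [zero_pow (by omega)] at hx1
    exact zero_ne_one hx1
  have hper : ∀ m, x ^ (Fintype.card F ^ m - 1) = 1 ↔ (minpoly F x).natDegree ∣ m := by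
    intro m
    rw [← pow_eq_self_iff_dvd]
    have hp : 0 < Fintype.card F ^ m := by positivity
    obtain ⟨j, hj⟩ := Nat.exists_eq_add_of_lt hp
    rw [hj]
    simp [pow_succ, hx0]
  have hdn := (hper n).1 hx1
  have hd := (hper _).2 (dvd_refl (minpoly F x).natDegree)
  generalize (minpoly F x).natDegree = d at *
  obtain ⟨s, rfl⟩ := hdn
  have hd0 : 0 < d := Nat.pos_of_mul_pos_right hn
  have hQ : 1 < Fintype.card F ^ d := Nat.one_lt_pow hd0.ne' hq1
  rw [pow_mul] at hx1 hx2 h3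
  have key : ∀ k, Fintype.card F ^ d - 1 ∣ k → x ^ k = 1 := by
    rintro _ ⟨j, rfl⟩
    rw [pow_mul, hd, one_pow]
  have hdiv : 3 ∣ Fintype.card F ^ d - 1 := by
    by_contra hc
    apply hx2
    apply key
    have hcop : Nat.Coprime (Fintype.card F ^ d - 1) 3 :=
      ((Nat.Prime.coprime_iff_not_dvd Nat.prime_three).2 hc).symm
    apply hcop.dvd_of_dvd_mul_left
    rw [Nat.mul_div_cancel' h3]
    simpa using Nat.sub_dvd_pow_sub_pow (Fintype.card F ^ d) 1 s
  obtain ⟨t, ht, hts⟩ := three_dvd_aux (s := s) (by omega : 0 < Fintype.card F ^ d) hdiv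
  rw [ht] at hx2
  refine ⟨dvd_mul_right d s, hdiv, ?_, hd, ?_⟩
  · rw [Nat.mul_div_cancel_left s hd0, ← hts]
    intro h
    apply hx2
    apply key
    rw [Nat.mul_div_assoc _ h]
    exact dvd_mul_right _ _
  · intro h
    apply hx2
    rw [mul_comm, Nat.mul_div_assoc _ hdiv, mul_comm, pow_mul, h, one_pow]

theorem SS_mono {d s : ℕ} (hdiv : 3 ∣ Fintype.card F ^ d - 1) (hs : ¬ 3 ∣ s) :
    SS F K d ⊆ SS F K (d * s) := by
  rintro x ⟨h1, h2⟩
  have hQ : 0 < Fintype.card F ^ d := by have := Fintype.card_pos (α := F); positivity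
  obtain ⟨t, ht, hts⟩ := three_dvd_aux (s := s) hQ hdiv
  refine ⟨?_, ?_⟩
  · rw [pow_mul, ht, pow_mul, h1, one_pow]
  · rw [pow_mul, ht, mul_comm, Nat.mul_div_assoc _ hdiv, mul_comm, pow_mul]
    intro h
    apply h2
    have h3 : (x ^ ((Fintype.card F ^ d - 1) / 3)) ^ 3 = 1 := by
      rw [← pow_mul, Nat.div_mul_cancel hdiv, h1]
    have hcop : Nat.Coprime 3 t :=
      (Nat.Prime.coprime_iff_not_dvd Nat.prime_three).2 (fun hh => hs (hts.1 hh))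
    have := orderOf_dvd_of_pow_eq_one h
    have h' := orderOf_dvd_of_pow_eq_one h3
    rw [← orderOf_eq_one_iff]
    exact Nat.eq_one_of_dvd_coprimes hcop h' this

theorem SS_sum {c m : ℕ} (hc : 0 < c) (hm : 0 < m) (hcd : 3 ∣ Fintype.card F ^ c - 1)
    (hm3 : ¬ 3 ∣ m)
    (H : ∀ d, d ∣ c * m → 3 ∣ Fintype.card F ^ d - 1 → ¬ 3 ∣ (c * m) / d → c ∣ d) :
    (SS F K (c * m)).ncard = ∑ e ∈ m.divisors, (TT F K (c * e)).ncard := by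
  classical
  have hdvd : ∀ e, 3 ∣ Fintype.card F ^ (c * e) - 1 := by
    intro e
    rw [pow_mul]
    exact hcd.trans (by simpa using Nat.sub_dvd_pow_sub_pow (Fintype.card F ^ c) 1 e)
  have hfin : (SS F K (c * m)).Finite := SS_finite (Nat.mul_pos hc hm)
  rw [Set.ncard_eq_toFinset_card _ hfin,
    Finset.card_eq_sum_card_fiberwise (f := fun x => (minpoly F x).natDegree / c)
      (t := m.divisors)]
  · refine Finset.sum_congr rfl fun e he => ?_
    rw [← Set.ncard_coe_finset]
    congr 1
    ext x
    simp only [Finset.coe_filter, Set.Finite.mem_toFinset, Set.mem_ofPred_eq, TT]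
    constructor
    · rintro ⟨hx, rfl⟩
      obtain ⟨h1, h2, h3, h4⟩ := mem_SS_imp (Nat.mul_pos hc hm) (hdvd m) hx
      have := H _ h1 h2 h3
      rw [Nat.mul_div_cancel' this]
      exact ⟨h4, rfl⟩
    · rintro ⟨hx, hdeg⟩
      rw [hdeg, Nat.mul_div_cancel_left e hc]
      refine ⟨?_, rfl⟩
      obtain ⟨s, rfl⟩ := Nat.dvd_of_mem_divisors he
      rw [← mul_assoc]
      exact SS_mono (hdvd e) (fun h => hm3 (h.mul_left e)) hx
  · intro x hx
    simp only [Finset.mem_coe, Set.Finite.mem_toFinset] at hx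
    obtain ⟨h1, h2, h3, h4⟩ := mem_SS_imp (Nat.mul_pos hc hm) (hdvd m) hx
    obtain ⟨e, he⟩ := H _ h1 h2 h3
    simp only [he, Nat.mul_div_cancel_left e hc, Finset.mem_coe, Nat.mem_divisors]
    rw [he] at h1
    exact ⟨Nat.dvd_of_mul_dvd_mul_left hc h1, hm.ne'⟩

theorem main_count (F : Type*) [Field F] [Fintype F] {c m : ℕ} (hc : 0 < c) (hm : 0 < m)
    (hcd : 3 ∣ Fintype.card F ^ c - 1) (hm3 : ¬ 3 ∣ m)
    (H : ∀ m, ¬ 3 ∣ m → ∀ d, d ∣ c * m → 3 ∣ Fintype.card F ^ d - 1 →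
      ¬ 3 ∣ (c * m) / d → c ∣ d) :
    ((IrredSet (X ^ 3 : F[X]) 1 (c * m)).ncard : ℚ) =
      2 / (3 * c) * (Ifun m ((Fintype.card F : ℚ) ^ c) - Ifun m 1) := by
  have hdvd : ∀ e, 3 ∣ Fintype.card F ^ (c * e) - 1 := by
    intro e
    rw [pow_mul]
    exact hcd.trans (by simpa using Nat.sub_dvd_pow_sub_pow (Fintype.card F ^ c) 1 e)
  have hsum := (ArithmeticFunction.sum_eq_iff_sum_mul_moebius_eq_on (R := ℚ)
    (f := fun e => ((TT F (AlgebraicClosure F) (c * e)).ncard : ℚ))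
    (g := fun e => 2 / 3 * (((Fintype.card F : ℚ) ^ c) ^ e - 1))
    {m | ¬ 3 ∣ m} (fun a b hab hb h => hb (h.trans hab))).1 (by
      intro e he he3
      rw [← Nat.cast_sum, ← SS_sum hc he hcd he3 (H e he3)]
      have h1 := card_SS (K := AlgebraicClosure F) (Nat.mul_pos hc he) (hdvd e)
      have hp : 1 ≤ Fintype.card F ^ (c * e) := Nat.one_le_pow _ _ Fintype.card_pos
      have h2 : (3 : ℚ) * (SS F (AlgebraicClosure F) (c * e)).ncard =
          2 * ((Fintype.card F : ℚ) ^ (c * e) - 1) := by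
        have := congrArg (Nat.cast : ℕ → ℚ) h1
        rw [Nat.cast_mul, Nat.cast_mul, Nat.cast_sub hp] at this
        exact_mod_cast this
      rw [← pow_mul]
      linarith) m hm hm3
  have hT := card_TT (K := AlgebraicClosure F) (Nat.mul_pos hc hm) (hdvd m)
  simp only [hT] at hsum
  rw [Nat.sum_divisorsAntidiagonal
    (f := fun a b => ((ArithmeticFunction.moebius a : ℤ) : ℚ) *
      (2 / 3 * (((Fintype.card F : ℚ) ^ c) ^ b - 1)))] at hsum
  have hc' : (c : ℚ) ≠ 0 := by exact_mod_cast hc.ne'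
  have hm' : (m : ℚ) ≠ 0 := by exact_mod_cast hm.ne'
  have e1 : ∑ i ∈ m.divisors, ((ArithmeticFunction.moebius i : ℤ) : ℚ) *
      (2 / 3 * (((Fintype.card F : ℚ) ^ c) ^ (m / i) - 1)) =
      2 / 3 * (m * (Ifun m ((Fintype.card F : ℚ) ^ c) - Ifun m 1)) := by
    unfold Ifun
    rw [← mul_sub, ← mul_assoc (m : ℚ), mul_one_div_cancel hm', one_mul,
      ← Finset.sum_sub_distrib, Finset.mul_sum]
    refine Finset.sum_congr rfl fun i _ => ?_
    rw [one_pow]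
    ring
  rw [e1] at hsum
  push_cast at hsum
  field_simp at hsum ⊢
  linarith

theorem odd_empty (F : Type*) [Field F] [Fintype F] {n : ℕ} (h : Fintype.card F ^ n % 3 = 2) :
    IrredSet (X ^ 3 : F[X]) 1 n = ∅ := by
  ext f
  simp only [Set.mem_empty_iff_false, iff_false]
  rintro ⟨hm, hi, hd, hirr⟩
  rw [ratTransform_eq] at hirr
  obtain ⟨a, ha⟩ := IsAlgClosed.exists_aeval_eq_zero (AlgebraicClosure F) f hi.degree_pos.ne'
  rw [irr_comp_iff hm hi hd ha] at hirr
  have h1 : a ^ (Fintype.card F ^ n) = a := by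
    rw [pow_eq_self_iff_dvd, (minpoly.eq_of_irreducible_of_monic hi ha hm).symm, hd]
  obtain ⟨j, hj⟩ : ∃ j, Fintype.card F ^ n = 3 * j + 2 := ⟨Fintype.card F ^ n / 3, by omega⟩
  refine hirr (a ^ (2 * j + 1)) ?_ ?_
  · rw [← pow_mul, mul_comm, pow_mul, h1]
  · rw [hj] at h1
    calc (a ^ (2 * j + 1)) ^ 3 = a ^ (3 * j + 2) * a ^ (3 * j + 1) := by ring
      _ = a * a ^ (3 * j + 1) := by rw [h1]
      _ = a ^ (3 * j + 2) := by ring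
      _ = a := h1

end Helpers

/-- Theorem 8 (Cohen): the number of monic irreducible `f` of degree `n > 1` over `F_q`
(`3 ∤ q`) such that `f(x³)` is irreducible. -/
theorem stmt8 {F : Type*} [Field F] [Fintype F] (q : ℕ) (hq : Fintype.card F = q)
    (hq3 : ¬ 3 ∣ q) (n : ℕ) (hn : 1 < n) :
    (q % 3 = 1 →
      ((IrredSet (X ^ 3 : F[X]) 1 n).ncard : ℚ) =
        (2 / (3 * (nThree n : ℚ))) *
          (Ifun (n / nThree n) ((q : ℚ) ^ nThree n) - Ifun (n / nThree n) 1)) ∧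
    (q % 3 = 2 →
      ((IrredSet (X ^ 3 : F[X]) 1 n).ncard : ℚ) =
        (1 / (3 * (nThree n : ℚ))) *
          (IfunD n (2 * nThree n) ((q : ℚ) ^ (2 * nThree n)) - IfunD n (2 * nThree n) 1)) := by
  subst hq
  have hn0 : n ≠ 0 := by omega
  have hn3 : nThree n ∣ n := Nat.ordProj_dvd n 3
  have hn3pos : 0 < nThree n := pow_pos (by norm_num) _
  have hnd : ¬ 3 ∣ n / nThree n := Nat.not_dvd_ordCompl Nat.prime_three hn0
  -- the power of `3` dividing `n` divides every `d` whose cofactor is prime to `3`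
  have hthree : ∀ (r m d : ℕ), ¬ 3 ∣ m → ¬ 3 ∣ r → d ∣ (r * nThree n) * m →
      ¬ 3 ∣ ((r * nThree n) * m) / d → nThree n ∣ d := by
    intro r m d hm hr hd hdd
    obtain ⟨s, hs⟩ := hd
    rcases Nat.eq_zero_or_pos d with rfl | hdpos
    · exact dvd_zero _
    rw [hs, Nat.mul_div_cancel_left s hdpos] at hdd
    have hcop : Nat.Coprime (nThree n) s :=
      Nat.Coprime.pow_left _ ((Nat.Prime.coprime_iff_not_dvd Nat.prime_three).2 hdd)
    apply hcop.dvd_of_dvd_mul_right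
    rw [← hs]
    exact Dvd.intro_left r rfl |>.mul_right m
  refine ⟨fun h => ?_, fun h => ?_⟩
  · have hd1 : 3 ∣ Fintype.card F ^ nThree n - 1 := by
      have h1 : 3 ∣ Fintype.card F - 1 := by omega
      exact h1.trans (by simpa using Nat.sub_dvd_pow_sub_pow (Fintype.card F) 1 (nThree n))
    have := main_count F hn3pos (Nat.div_pos (Nat.le_of_dvd (by omega) hn3) hn3pos) hd1 hnd
      (by
        intro m hm d hd _ hdd
        exact hthree 1 m d hm (by norm_num) (by simpa using hd) (by simpa using hdd))
    rwa [Nat.mul_div_cancel' hn3] at this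
  · have hmod : ∀ d, Fintype.card F ^ d % 3 = if Even d then 1 else 2 := by
      intro d
      induction d with
      | zero => simp
      | succ k ih =>
        rw [pow_succ, Nat.mul_mod, ih, h]
        by_cases hk : Even k <;> simp [hk, Nat.even_add_one]
    by_cases hev : Even n
    · have h2n : 2 * nThree n ∣ n := by
        refine Nat.Coprime.mul_dvd_of_dvd_of_dvd ?_ hev.two_dvd hn3
        exact Nat.Coprime.pow_right _ (by norm_num)
      have hcpos : 0 < 2 * nThree n := by omega
      have hd1 : 3 ∣ Fintype.card F ^ (2 * nThree n) - 1 := by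
        have := hmod (2 * nThree n)
        simp at this
        omega
      have hm3 : ¬ 3 ∣ n / (2 * nThree n) := by
        intro hc
        apply hnd
        obtain ⟨k, hk⟩ := h2n
        rw [Nat.div_eq_of_eq_mul_right hcpos hk] at hc
        rw [show n / nThree n = 2 * k from
          Nat.div_eq_of_eq_mul_right hn3pos (hk.trans (by ring))]
        exact hc.mul_left 2
      have := main_count F hcpos (Nat.div_pos (Nat.le_of_dvd (by omega) h2n) hcpos) hd1 hm3
        (by
          intro m hm d hd hd3 hdd
          refine Nat.Coprime.mul_dvd_of_dvd_of_dvd ?_ ?_ (hthree 2 m d hm (by norm_num) hd hdd)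
          · exact Nat.Coprime.pow_right _ (by norm_num)
          · by_contra hc
            have h5 := hmod d
            rw [if_neg (fun he => hc he.two_dvd)] at h5
            omega)
      rw [Nat.mul_div_cancel' h2n] at this
      rw [this, IfunD, IfunD, if_pos h2n, if_pos h2n]
      push_cast
      have : (nThree n : ℚ) ≠ 0 := by exact_mod_cast hn3pos.ne'
      field_simp
    · have h2n : ¬ 2 * nThree n ∣ n := fun hc =>
        hev (even_iff_two_dvd.2 ((Dvd.intro _ rfl).trans hc))
      have h5 := hmod n
      rw [if_neg hev] at h5
      rw [odd_empty F h5, IfunD, IfunD, if_neg h2n, if_neg h2n]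
      simp
end

section
/- Let F_q be a finite field of characteristic at least five, let τ be a nonzero element of F_q, and let n > 1 be an integer. Then |𝓘(x^3 − τx, 1, n, q)| = (1/(3 n_3)) (I(n/n_3, q^{n_3}) − I(n/n_3, ε)), where ε = 1 if q ≡ 1 (mod 3) and ε = −1 if q ≡ −1 (mod 3). -/
open Polynomial

section conic
variable {K : Type*} [Field K] [Fintype K] [DecidableEq K]

theorem isSquare_neg_three_iff (h2 : (2:K) ≠ 0) (h3 : (3:K) ≠ 0) :
    IsSquare (-3 : K) ↔ 3 ∣ Fintype.card K - 1 := by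
  constructor
  · rintro ⟨s, hs⟩
    set w : K := (s - 1) / 2 with hw
    have hw2 : w ^ 2 + w + 1 = 0 := by
      rw [hw]; field_simp; linear_combination -hs
    have hw3 : w ^ 3 = 1 := by linear_combination (w - 1) * hw2
    have hw1 : w ≠ 1 := by
      intro h; rw [h] at hw2; apply h3; linear_combination hw2
    have ho : orderOf w = 3 := orderOf_eq_prime hw3 hw1
    rw [← ho]
    apply orderOf_dvd_of_pow_eq_one
    apply FiniteField.pow_card_sub_one_eq_one
    intro h0; rw [h0] at hw3; simp at hw3
  · intro h
    rw [← Fintype.card_units] at h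
    have : Fact (Nat.Prime 3) := ⟨Nat.prime_three⟩
    obtain ⟨u, hu⟩ := exists_prime_orderOf_dvd_card 3 h
    have hu3 : (u : K) ^ 3 = 1 := by
      rw [← Units.val_pow_eq_pow_val, ← hu, pow_orderOf_eq_one]; simp
    have hu1 : (u : K) ≠ 1 := by
      intro h1
      have : u = 1 := by ext; simpa using h1
      rw [this] at hu; simp at hu
    have hq : (u : K) ^ 2 + u + 1 = 0 := by
      have : ((u : K) - 1) * ((u : K) ^ 2 + u + 1) = 0 := by linear_combination hu3
      exact (mul_eq_zero.mp this).resolve_left (sub_ne_zero.mpr hu1)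
    exact ⟨2 * u + 1, by linear_combination -4 * hq⟩

theorem sum_fiber_sq (hK : ringChar K ≠ 2) (g : K → ℤ) :
    ∑ v : K, g (v ^ 2) = ∑ t : K, (quadraticChar K t + 1) * g t := by
  classical
  rw [← Finset.sum_fiberwise (s := Finset.univ) (g := fun v : K => v ^ 2)]
  refine Finset.sum_congr rfl fun t _ => ?_
  rw [Finset.sum_congr rfl (g := fun _ => g t), Finset.sum_const, ← quadraticChar_card_sqrts hK]
  · simp
  · intro x hx
    simp at hx; rw [hx]

theorem conic_card (hK : ringChar K ≠ 2) (h2 : (2:K) ≠ 0) (h3 : (3:K) ≠ 0) (τ : K) (hτ : τ ≠ 0) :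
    ((Finset.univ.filter fun p : K × K => p.1 ^ 2 + p.1 * p.2 + p.2 ^ 2 = τ).card : ℤ)
      = Fintype.card K - quadraticChar K (-3) := by
  classical
  set χ := quadraticChar K
  have e1 : (Finset.univ.filter fun p : K × K => p.1 ^ 2 + p.1 * p.2 + p.2 ^ 2 = τ).card
      = (Finset.univ.filter fun p : K × K => p.1 ^ 2 = 4 * τ - 3 * p.2 ^ 2).card := by
    refine Finset.card_bij' (fun p _ => (2 * p.1 + p.2, p.2)) (fun p _ => ((p.1 - p.2) / 2, p.2))
      ?_ ?_ ?_ ?_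
    · rintro ⟨x, y⟩ h; simp at h ⊢; linear_combination 4 * h
    · rintro ⟨x, y⟩ h; simp at h ⊢; field_simp; linear_combination h
    · rintro ⟨x, y⟩ h; simp; field_simp
    · rintro ⟨x, y⟩ h; simp; field_simp; ring
  have e2 : ((Finset.univ.filter fun p : K × K => p.1 ^ 2 = 4 * τ - 3 * p.2 ^ 2).card : ℤ)
      = ∑ v : K, (χ (4 * τ - 3 * v ^ 2) + 1) := by
    rw [Finset.card_filter, Fintype.sum_prod_type_right]
    push_cast
    refine Finset.sum_congr rfl fun v _ => ?_
    rw [← quadraticChar_card_sqrts hK]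
    rw [Finset.sum_boole]; simp
  have e3 := sum_fiber_sq hK (fun t => χ (4 * τ - 3 * t))
  have e4 : ∑ t : K, χ (4 * τ - 3 * t) = 0 := by
    rw [← quadraticChar_sum_zero hK]
    exact Fintype.sum_equiv
      ⟨fun t => 4 * τ - 3 * t, fun s => (4 * τ - s) / 3, fun t => by field_simp; ring,
        fun t => by field_simp; ring⟩ _ _ (fun t => rfl)
  have hj : ∑ s : K, χ s * χ (1 - s) = - χ (-1) := by
    have := jacobiSum_nontrivial_inv (quadraticChar_ne_one hK)
    rwa [(quadraticChar_isQuadratic K).inv] at this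
  have h4 : (4 : K) ≠ 0 := by
    have : (4 : K) = 2 * 2 := by norm_num
    rw [this]; exact mul_ne_zero h2 h2
  have e5 : ∑ t : K, χ t * χ (4 * τ - 3 * t) = - χ (-3) := by
    have : ∑ t : K, χ t * χ (4 * τ - 3 * t) = ∑ s : K, χ 3 * (χ s * χ (1 - s)) := by
      refine Fintype.sum_equiv
        ⟨fun t => 3 * t / (4 * τ), fun s => 4 * τ * s / 3, fun t => by field_simp,
          fun t => by field_simp⟩ _ _ (fun t => ?_)
      simp only [Equiv.coe_fn_mk, ← map_mul]
      have : t * (4 * τ - 3 * t) = (3 * (3 * t / (4 * τ) * (1 - 3 * t / (4 * τ)))) * (4 * τ / 3) ^ 2 := by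
        field_simp
      rw [this, map_mul, quadraticChar_sq_one' (div_ne_zero (mul_ne_zero h4 hτ) h3)]
      simp
    rw [this, ← Finset.mul_sum, hj, show (-3 : K) = 3 * (-1) by ring, map_mul]; ring
  rw [e1, e2, Finset.sum_add_distrib, e3]
  simp only [add_mul, one_mul, Finset.sum_add_distrib]
  rw [e4, e5]
  simp; ring

theorem cubic_fiber (h2 : (2:K) ≠ 0) (h3 : (3:K) ≠ 0) (τ : K) (hτ : τ ≠ 0) (α : K) :
    ((Finset.univ.filter fun p : K × K => p.1 ^ 2 + p.1 * p.2 + p.2 ^ 2 = τ ∧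
        p.1 ^ 3 - τ * p.1 = α).card : ℤ) + 3 = 
      3 * (Finset.univ.filter fun x : K => x ^ 3 - τ * x = α).card +
      (if ∀ x : K, x ^ 3 - τ * x ≠ α then 3 else 0) := by
  classical
  by_cases hT : ∃ a b : K, a ^ 2 + a * b + b ^ 2 = τ ∧ a ^ 3 - τ * a = α
  · obtain ⟨a, b, hab, ha⟩ := hT
    obtain ⟨c, hc⟩ : ∃ c, c = - a - b := ⟨_, rfl⟩
    rw [if_neg (by push Not; exact ⟨a, ha⟩)]
    have hS : (Finset.univ.filter fun x : K => x ^ 3 - τ * x = α) = {a, b, c} := by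
      ext x
      have : x ^ 3 - τ * x - α = (x - a) * ((x - b) * (x - c)) := by
        subst hc; rw [← ha, ← hab]; ring
      simp only [Finset.mem_filter, Finset.mem_univ, true_and, Finset.mem_insert,
        Finset.mem_singleton]
      rw [← sub_eq_zero, this]; simp [sub_eq_zero]
    have hT : (Finset.univ.filter fun p : K × K => p.1 ^ 2 + p.1 * p.2 + p.2 ^ 2 = τ ∧
        p.1 ^ 3 - τ * p.1 = α) = {(a,b),(a,c),(b,a),(b,c),(c,a),(c,b)} := by
      ext ⟨x, y⟩
      have key : x ^ 3 - τ * x - α = (x - a) * ((x - b) * (x - c)) := by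
        subst hc; rw [← ha, ← hab]; ring
      simp only [Finset.mem_filter, Finset.mem_univ, true_and, Finset.mem_insert,
        Finset.mem_singleton, Prod.mk.injEq]
      constructor
      · rintro ⟨h1, h2⟩
        rw [← sub_eq_zero, key] at h2
        simp only [mul_eq_zero, sub_eq_zero] at h2
        rcases h2 with rfl | rfl | rfl
        · have : (y - b) * (y - c) = 0 := by subst hc; linear_combination h1 - hab
          simp only [mul_eq_zero, sub_eq_zero] at this
          tauto
        · have : (y - a) * (y - c) = 0 := by subst hc; linear_combination h1 - hab
          simp only [mul_eq_zero, sub_eq_zero] at this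
          tauto
        · have : (y - a) * (y - b) = 0 := by subst hc; linear_combination h1 - hab
          simp only [mul_eq_zero, sub_eq_zero] at this
          tauto
      · subst hc; subst ha; subst hab
        rintro (⟨rfl, rfl⟩ | ⟨rfl, rfl⟩ | ⟨rfl, rfl⟩ | ⟨rfl, rfl⟩ | ⟨rfl, rfl⟩ | ⟨rfl, rfl⟩) <;>
          constructor <;> ring
    rw [hS, hT]
    have hn : ¬ (a = b ∧ a = c) := by
      rintro ⟨rfl, h⟩
      have : 3 * a = 0 := by linear_combination h + hc
      have ha0 : a = 0 := (mul_eq_zero.mp this).resolve_left h3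
      subst ha0; apply hτ; rw [← hab]; ring
    by_cases h1 : a = b <;> by_cases h2 : a = c <;> by_cases h3 : b = c
    all_goals
      first
      | (exfalso; clear hS hT; grind)
      | skip
    · subst h1
      have h2' := Ne.symm h2
      clear hc hab
      rw [show ({(a,a),(a,c),(a,a),(a,c),(c,a),(c,a)} : Finset (K × K)) = {(a,a),(a,c),(c,a)} by
        ext ⟨x,y⟩; simp]
      rw [Finset.card_insert_of_notMem, Finset.card_insert_of_notMem] <;> simp [h2, h2']
    · subst h2
      have h1' := Ne.symm h1
      clear hc hab
      rw [show ({(a,b),(a,a),(b,a),(b,a),(a,a),(a,b)} : Finset (K × K)) = {(a,a),(a,b),(b,a)} by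
        ext ⟨x,y⟩; simp; tauto]
      rw [show ({a,b,a} : Finset K) = {a,b} by ext x; simp; tauto]
      rw [Finset.card_insert_of_notMem, Finset.card_insert_of_notMem] <;> simp [h1, h1']
    · subst h3
      have h1' := Ne.symm h1
      clear hc hab
      rw [show ({(a,b),(a,b),(b,a),(b,b),(b,a),(b,b)} : Finset (K × K)) = {(b,b),(a,b),(b,a)} by
        ext ⟨x,y⟩; simp; tauto]
      rw [Finset.card_insert_of_notMem, Finset.card_insert_of_notMem] <;> simp [h1, h1']
    · have h1' := Ne.symm h1
      have h2' := Ne.symm h2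
      have h3' := Ne.symm h3
      clear hc hab hS hT hn
      simp [Finset.card_insert_of_notMem, h1, h2, h3, h1', h2', h3']
  · rw [Finset.filter_false_of_mem (by rintro ⟨a, b⟩ _ h; exact hT ⟨a, b, h⟩)]
    split_ifs with h
    · rw [Finset.filter_false_of_mem (by rintro x _; exact h x)]; simp
    · push Not at h
      obtain ⟨r, hr⟩ := h
      have : (Finset.univ.filter fun x : K => x ^ 3 - τ * x = α) = {r} := by
        ext x; simp
        constructor
        · intro hx
          by_contra hne
          apply hT
          refine ⟨r, x, ?_, hr⟩
          have : (x - r) * (r ^ 2 + r * x + x ^ 2 - τ) = 0 := by linear_combination hx - hr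
          exact sub_eq_zero.mp ((mul_eq_zero.mp this).resolve_left (sub_ne_zero.mpr hne))
        · rintro rfl; exact hr
      rw [this]; simp

theorem cubic_count (hK : ringChar K ≠ 2) (h2 : (2:K) ≠ 0) (h3 : (3:K) ≠ 0) (τ : K) (hτ : τ ≠ 0) :
    3 * ((Finset.univ.filter fun α : K => ∀ x : K, x ^ 3 - τ * x ≠ α).card : ℤ)
      = Fintype.card K - quadraticChar K (-3) := by
  classical
  rw [← conic_card hK h2 h3 τ hτ]
  have := Finset.sum_congr (rfl : (Finset.univ : Finset K) = _)
    fun α _ => cubic_fiber h2 h3 τ hτ α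
  rw [Finset.sum_add_distrib, Finset.sum_add_distrib, ← Finset.mul_sum] at this
  have a1 := Finset.card_eq_sum_card_fiberwise (s := Finset.univ.filter fun p : K × K => p.1 ^ 2 + p.1 * p.2 + p.2 ^ 2 = τ)
    (f := fun p : K × K => p.1 ^ 3 - τ * p.1) (t := Finset.univ) (by simp)
  have a2 := Finset.card_eq_sum_card_fiberwise (s := (Finset.univ : Finset K))
    (f := fun x : K => x ^ 3 - τ * x) (t := Finset.univ) (by simp)
  simp only [Finset.filter_filter] at a1
  rw [← Nat.cast_sum, ← Nat.cast_sum, ← a1, ← a2] at this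
  rw [← Finset.sum_filter] at this
  simp only [Finset.sum_const, nsmul_eq_mul, Finset.card_univ] at this
  linarith

end conic

section ext
variable {F : Type*} [Field F]

theorem ratTransform_one (g f : F[X]) : ratTransform g 1 f = f.comp g := by
  rw [ratTransform, comp, eval₂_eq_sum_range]; simp

variable {L : Type*} [Field L] [Algebra F L] [Finite L]

theorem root_transfer (τ : F) (α : L) {M : Type*} [Field M] [Algebra F M]
    (h : Module.finrank F M ∣ Module.finrank F L) (y : M)
    (hy : minpoly F (y ^ 3 - algebraMap F M τ * y) = minpoly F α) :
    ∃ β : L, β ^ 3 - algebraMap F L τ * β = α := by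
  obtain ⟨φ⟩ := FiniteField.nonempty_algHom_of_finrank_dvd h
  have hα : IsAlgebraic F α := Algebra.IsAlgebraic.isAlgebraic α
  obtain ⟨σ, hσ⟩ := minpoly.exists_algEquiv_of_root (K := F) (x := φ (y ^ 3 - algebraMap F M τ * y))
    hα (by rw [← hy, aeval_algHom_apply, minpoly.aeval, map_zero])
  refine ⟨σ (φ y), ?_⟩
  rw [← hσ]; simp

theorem natDegree_g (τ : F) : (X ^ 3 - C τ * X : F[X]).natDegree = 3 := by compute_degree!
theorem monic_g (τ : F) : (X ^ 3 - C τ * X : F[X]).Monic := by monicity!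

theorem noroot_iff (τ : F) (α : L) :
    (∀ x : L, x ^ 3 - algebraMap F L τ * x ≠ α) ↔
      Irreducible ((minpoly F α).comp (X ^ 3 - C τ * X)) ∧
        ¬ 3 * (minpoly F α).natDegree ∣ Module.finrank F L := by
  have hα : IsIntegral F α := Algebra.IsIntegral.isIntegral α
  have hmon : ((minpoly F α).comp (X ^ 3 - C τ * X)).Monic :=
    (minpoly.monic hα).comp (monic_g τ) (by rw [natDegree_g]; norm_num)
  have hdeg : ((minpoly F α).comp (X ^ 3 - C τ * X)).natDegree = 3 * (minpoly F α).natDegree := by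
    rw [natDegree_comp, natDegree_g, mul_comm]
  constructor
  · intro h
    have hirr : Irreducible ((minpoly F α).comp (X ^ 3 - C τ * X)) := by
      refine irreducible_comp (minpoly.monic hα) (monic_g τ) (minpoly.irreducible hα) ?_
      intro E _ _ x hx
      have hxi : IsIntegral F x := by
        by_contra hne
        rw [minpoly.eq_zero hne] at hx
        exact minpoly.ne_zero hα hx.symm
      have e : ((X ^ 3 - C τ * X : F[X]).map (algebraMap F (IntermediateField.adjoin F {x})) - C (IntermediateField.AdjoinSimple.gen F x))
          = X ^ 3 - C (algebraMap F (IntermediateField.adjoin F {x}) τ) * X - C (IntermediateField.AdjoinSimple.gen F x) := by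
        simp
      rw [e]
      apply irreducible_of_degree_le_three_of_not_isRoot
      · have : (X ^ 3 - C (algebraMap F (IntermediateField.adjoin F {x}) τ) * X - C (IntermediateField.AdjoinSimple.gen F x)).natDegree = 3 := by
          compute_degree!
        rw [this]; simp
      · intro y hy
        have hy' : y ^ 3 - algebraMap F (IntermediateField.adjoin F {x}) τ * y = IntermediateField.AdjoinSimple.gen F x := by
          simpa [IsRoot, sub_eq_zero] using hy
        obtain ⟨β, hβ⟩ := root_transfer τ α (M := (IntermediateField.adjoin F {x}))
          (by rw [IntermediateField.adjoin.finrank hxi, hx]; exact minpoly.degree_dvd hα) y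
          (by rw [hy', IntermediateField.minpoly_gen, hx])
        exact h β hβ
    refine ⟨hirr, fun hd => ?_⟩
    have := Fact.mk hirr
    obtain ⟨β, hβ⟩ := root_transfer τ α (M := AdjoinRoot ((minpoly F α).comp (X ^ 3 - C τ * X)))
      (by
        rw [(AdjoinRoot.powerBasis hirr.ne_zero).finrank, AdjoinRoot.powerBasis_dim, hdeg]
        exact hd)
      (AdjoinRoot.root _)
      (by
        symm
        apply minpoly.eq_of_irreducible_of_monic (minpoly.irreducible hα) _ (minpoly.monic hα)
        have h0 := AdjoinRoot.aeval_eq (f := (minpoly F α).comp (X ^ 3 - C τ * X)) ((minpoly F α).comp (X ^ 3 - C τ * X))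
        rw [AdjoinRoot.mk_self, aeval_comp] at h0
        simpa using h0)
    exact h β hβ
  · rintro ⟨hirr, hd⟩ β hβ
    apply hd
    have hm : (minpoly F α).comp (X ^ 3 - C τ * X) = minpoly F β := by
      apply minpoly.eq_of_irreducible_of_monic hirr _ hmon
      rw [aeval_comp]; simp [hβ]
    rw [← hdeg, hm]
    exact minpoly.degree_dvd (Algebra.IsIntegral.isIntegral β)

theorem card_minpoly_fiber [Fintype L] [DecidableEq L] {f : F[X]} (hf : f.Monic) (hi : Irreducible f)
    (hd : f.natDegree ∣ Module.finrank F L) :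
    (Set.ncard {α : L | minpoly F α = f}) = f.natDegree := by
  have := Fact.mk hi
  have hfr : Module.finrank F (AdjoinRoot f) = f.natDegree := by
    rw [(AdjoinRoot.powerBasis hi.ne_zero).finrank, AdjoinRoot.powerBasis_dim]
  have h1 := FiniteField.natCard_algHom_of_finrank_dvd (F := F) (K := AdjoinRoot f) (L := L)
    (by rw [hfr]; exact hd)
  rw [hfr, Nat.card_congr (AdjoinRoot.equiv L F f hi.ne_zero)] at h1
  rw [← h1, ← Nat.card_coe_set_eq]
  refine Nat.card_congr (Equiv.subtypeEquivRight fun x => ?_)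
  rw [mem_aroots]
  constructor
  · rintro rfl; exact ⟨hi.ne_zero, minpoly.aeval _ _⟩
  · rintro ⟨_, h⟩; exact (minpoly.eq_of_irreducible_of_monic hi h hf).symm

end ext

section count
variable {F : Type*} [Field F] {L : Type*} [Field L] [Algebra F L] [Fintype L]

theorem mem_irredSet_minpoly (τ : F) (α : L) (h : ∀ x : L, x ^ 3 - algebraMap F L τ * x ≠ α) :
    minpoly F α ∈ IrredSet (X ^ 3 - C τ * X) 1 (minpoly F α).natDegree := by
  have hα : IsIntegral F α := Algebra.IsIntegral.isIntegral α
  refine ⟨minpoly.monic hα, minpoly.irreducible hα, rfl, ?_⟩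
  rw [ratTransform_one]
  exact ((noroot_iff τ α).mp h).1

theorem irredSet_finite (τ : F) (d : ℕ) (hd : d ∣ Module.finrank F L) (hd0 : d ≠ 0) :
    (IrredSet (X ^ 3 - C τ * X) 1 d : Set F[X]).Finite := by
  classical
  refine (Set.finite_range (fun α : L => minpoly F α)).subset ?_
  rintro f ⟨hm, hi, hdeg, -⟩
  have h := card_minpoly_fiber (L := L) hm hi (hdeg ▸ hd)
  have hne : {α : L | minpoly F α = f}.Nonempty := by
    apply Set.nonempty_of_ncard_ne_zero
    rw [h, hdeg]; exact hd0
  obtain ⟨α, hα⟩ := hne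
  exact ⟨α, hα⟩

theorem sum_irred [DecidableEq L] (τ : F) :
    (Finset.univ.filter fun α : L => ∀ x : L, x ^ 3 - algebraMap F L τ * x ≠ α).card
      = ∑ d ∈ (Module.finrank F L).divisors.filter (fun d => ¬ 3 * d ∣ Module.finrank F L),
          d * (IrredSet (X ^ 3 - C τ * X : F[X]) 1 d).ncard := by
  classical
  have hn : Module.finrank F L ≠ 0 := Module.finrank_pos.ne'
  rw [Finset.card_eq_sum_card_fiberwise (f := fun α : L => (minpoly F α).natDegree)
    (t := (Module.finrank F L).divisors.filter (fun d => ¬ 3 * d ∣ Module.finrank F L))]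
  · refine Finset.sum_congr rfl fun d hd => ?_
    simp only [Finset.mem_filter, Nat.mem_divisors] at hd
    obtain ⟨⟨hdn, -⟩, hd3⟩ := hd
    have hd0 : d ≠ 0 := by rintro rfl; exact hn (zero_dvd_iff.mp hdn)
    have hfin := irredSet_finite (L := L) τ d hdn hd0
    rw [Set.ncard_eq_toFinset_card _ hfin]
    rw [Finset.card_eq_sum_card_fiberwise (f := fun α : L => minpoly F α) (t := hfin.toFinset)]
    · rw [Finset.sum_congr rfl (g := fun _ => d)]
      · rw [Finset.sum_const, smul_eq_mul, mul_comm]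
      · intro f hf
        rw [Set.Finite.mem_toFinset] at hf
        obtain ⟨hm, hi, hdeg, hR⟩ := hf
        have hcf := card_minpoly_fiber (L := L) hm hi (hdeg ▸ hdn)
        rw [hdeg] at hcf
        refine Eq.trans ?_ hcf
        rw [← Set.ncard_coe_finset]
        congr 1
        ext α
        simp only [Finset.coe_filter, Finset.mem_filter, Finset.mem_univ, true_and,
          Set.mem_ofPred_eq]
        constructor
        · exact fun h => h.2
        · intro h
          refine ⟨⟨?_, by rw [h, hdeg]⟩, h⟩
          apply (noroot_iff τ α).mpr
          rw [h, ← ratTransform_one, hdeg]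
          exact ⟨hR, hd3⟩
    · intro α hα
      simp only [Finset.coe_filter, Finset.mem_filter, Finset.mem_univ, true_and,
          Set.mem_ofPred_eq] at hα
      simp only [Set.Finite.coe_toFinset]
      rw [← hα.2]
      exact mem_irredSet_minpoly τ α hα.1
  · intro α hα
    simp only [Finset.coe_filter, Finset.mem_filter, Finset.mem_univ, true_and,
          Set.mem_ofPred_eq] at hα
    simp only [Finset.coe_filter, Set.mem_ofPred_eq, Nat.mem_divisors]
    exact ⟨⟨minpoly.degree_dvd (Algebra.IsIntegral.isIntegral α), hn⟩, ((noroot_iff τ α).mp hα).2⟩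

end count

theorem two_pow_mod_three_even (n : ℕ) (h : Even n) : 2 ^ n % 3 = 1 := by
  obtain ⟨r, rfl⟩ := h
  rw [← two_mul, pow_mul, Nat.pow_mod]; simp

theorem two_pow_mod_three_odd (n : ℕ) (h : Odd n) : 2 ^ n % 3 = 2 := by
  obtain ⟨r, rfl⟩ := h
  rw [pow_succ, pow_mul, Nat.mul_mod, Nat.pow_mod]; simp

theorem main_sum {F : Type*} [Field F] [Fintype F] (q : ℕ) (hq : Fintype.card F = q)
    (hchar : 5 ≤ ringChar F) (τ : F) (hτ : τ ≠ 0) (ε : ℚ)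
    (hε : (q % 3 = 1 ∧ ε = 1) ∨ (q % 3 = 2 ∧ ε = -1)) (n : ℕ) (hn : 0 < n) :
    ∑ d ∈ n.divisors.filter (fun d => ¬ 3 * d ∣ n),
          (d : ℚ) * (IrredSet (X ^ 3 - C τ * X : F[X]) 1 d).ncard = ((q : ℚ) ^ n - ε ^ n) / 3 := by
  classical
  have hp : (ringChar F).Prime := CharP.char_is_prime F _
  have := Fact.mk hp
  have : NeZero n := ⟨hn.ne'⟩
  let L := FiniteField.Extension F (ringChar F) n
  have : Fintype L := Fintype.ofFinite L
  have hcard : Fintype.card L = q ^ n := by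
    rw [Fintype.card_eq_nat_card, FiniteField.natCard_extension, ← Fintype.card_eq_nat_card, hq]
  have hfr : Module.finrank F L = n := FiniteField.finrank_extension F (ringChar F) n
  have hcp : CharP L (ringChar F) := charP_of_injective_algebraMap (algebraMap F L).injective _
  have hrc : ringChar L = ringChar F := ringChar.eq_iff.mpr hcp
  have h2 : (2 : L) ≠ 0 := by
    intro h
    have := (CharP.cast_eq_zero_iff L (ringChar F) 2).mp (by exact_mod_cast h)
    have := Nat.le_of_dvd (by norm_num) this
    omega
  have h3 : (3 : L) ≠ 0 := by
    intro h
    have := (CharP.cast_eq_zero_iff L (ringChar F) 3).mp (by exact_mod_cast h)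
    have := Nat.le_of_dvd (by norm_num) this
    omega
  have hc := cubic_count (K := L) (by omega) h2 h3 (algebraMap F L τ) (by simpa using hτ)
  have hs := sum_irred (F := F) (L := L) τ
  rw [hfr] at hs
  have hs' : ∑ d ∈ n.divisors.filter (fun d => ¬ 3 * d ∣ n),
          (d : ℚ) * (IrredSet (X ^ 3 - C τ * X : F[X]) 1 d).ncard =
      ((Finset.univ.filter fun α : L => ∀ x : L, x ^ 3 - algebraMap F L τ * x ≠ α).card : ℚ) := by
    rw [hs]; push_cast; rfl
  rw [hs']
  have hχ : ((quadraticChar L (-3) : ℤ) : ℚ) = ε ^ n := by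
    have hneg : (-3 : L) ≠ 0 := neg_ne_zero.mpr h3
    have hsq := isSquare_neg_three_iff h2 h3
    rw [hcard] at hsq
    have hpos : 0 < q ^ n := by rw [← hcard]; exact Fintype.card_pos
    have hmod : (q ^ n) % 3 = (q % 3) ^ n % 3 := Nat.pow_mod _ _ _
    rcases hε with ⟨h, rfl⟩ | ⟨h, rfl⟩
    · rw [h, one_pow] at hmod
      rw [(quadraticChar_one_iff_isSquare hneg).mpr (hsq.mpr (by omega))]; simp
    · rw [h] at hmod
      rcases Nat.even_or_odd n with he | ho
      · have := two_pow_mod_three_even n he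
        rw [(quadraticChar_one_iff_isSquare hneg).mpr (hsq.mpr (by omega)), he.neg_one_pow]; simp
      · have := two_pow_mod_three_odd n ho
        rw [quadraticChar_neg_one_iff_not_isSquare.mpr (fun hh => by
          have := hsq.mp hh
          omega), ho.neg_one_pow]; simp
  rw [hcard] at hc
  have hc' : (3 : ℚ) * ((Finset.univ.filter fun α : L => ∀ x : L, x ^ 3 - algebraMap F L τ * x ≠ α).card : ℚ) = (q : ℚ) ^ n - (quadraticChar L (-3) : ℤ) := by
    exact_mod_cast hc
  rw [hχ] at hc'
  linarith

theorem sum_reindex (B : ℕ → ℚ) (k m : ℕ) (hm : 0 < m) (h3 : ¬ 3 ∣ m) :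
    ∑ d ∈ (3 ^ k * m).divisors.filter (fun d => ¬ 3 * d ∣ 3 ^ k * m), B d
      = ∑ e ∈ m.divisors, B (3 ^ k * e) := by
  symm
  have hk : 0 < 3 ^ k := by positivity
  rw [← Finset.sum_image (f := B) (g := fun e => 3 ^ k * e)
    (by intro a _ b _ h; exact Nat.eq_of_mul_eq_mul_left hk h)]
  refine Finset.sum_congr ?_ fun _ _ => rfl
  ext d
  simp only [Finset.mem_image, Nat.mem_divisors, Finset.mem_filter]
  constructor
  · rintro ⟨e, ⟨he, -⟩, rfl⟩
    refine ⟨⟨Nat.mul_dvd_mul_left _ he, by positivity⟩, fun h => h3 ?_⟩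
    rw [mul_left_comm] at h
    exact (dvd_mul_right 3 e).trans (Nat.dvd_of_mul_dvd_mul_left hk h)
  · rintro ⟨⟨⟨c, hc⟩, -⟩, hd⟩
    have hc3 : ¬ 3 ∣ c := by
      rintro ⟨c', rfl⟩
      exact hd ⟨c', by rw [hc]; ring⟩
    have hcop : Nat.Coprime (3 ^ k) c :=
      Nat.Coprime.pow_left _ ((Nat.Prime.coprime_iff_not_dvd Nat.prime_three).mpr hc3)
    have : 3 ^ k ∣ d := hcop.dvd_of_dvd_mul_right (hc ▸ dvd_mul_right _ _)
    obtain ⟨e, rfl⟩ := this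
    refine ⟨e, ⟨⟨c, ?_⟩, hm.ne'⟩, rfl⟩
    rw [mul_assoc] at hc
    exact Nat.eq_of_mul_eq_mul_left hk hc

/-- Theorem 10: counting monic irreducible `f` of degree `n > 1` over `F_q` (characteristic
at least five, `τ ≠ 0`) such that `f(x³ − τx)` is irreducible; `ε = (q/3)` is the Legendre
symbol, i.e. `ε = 1` if `q ≡ 1 (mod 3)` and `ε = −1` if `q ≡ −1 (mod 3)`. -/
theorem stmt10 {F : Type*} [Field F] [Fintype F] (q : ℕ) (hq : Fintype.card F = q)
    (hchar : 5 ≤ ringChar F) (τ : F) (hτ : τ ≠ 0)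
    (n : ℕ) (hn : 1 < n) :
    ∀ ε : ℚ, ((q % 3 = 1 ∧ ε = 1) ∨ (q % 3 = 2 ∧ ε = -1)) →
      ((IrredSet (X ^ 3 - C τ * X) 1 n).ncard : ℚ) =
        (1 / (3 * (nThree n : ℚ))) *
          (Ifun (n / nThree n) ((q : ℚ) ^ nThree n) - Ifun (n / nThree n) ε) := by
  intro ε hε
  have hn0 : n ≠ 0 := by omega
  unfold nThree
  obtain ⟨k, hk⟩ : ∃ k, k = n.factorization 3 := ⟨_, rfl⟩
  obtain ⟨m, hm⟩ : ∃ m, m = n / 3 ^ k := ⟨_, rfl⟩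
  have hnm : 3 ^ k * m = n := by rw [hm, hk]; exact Nat.ordProj_mul_ordCompl_eq_self n 3
  have hm3 : ¬ 3 ∣ m := by rw [hm, hk]; exact Nat.not_dvd_ordCompl Nat.prime_three hn0
  have hm0 : 0 < m := by
    rcases Nat.eq_zero_or_pos m with h | h
    · rw [h] at hnm; omega
    · exact h
  rw [← hk, ← hm]
  have hε3 : ε ^ 3 ^ k = ε := by
    have ho : Odd (3 ^ k) := Odd.pow (by decide)
    rcases hε with ⟨-, rfl⟩ | ⟨-, rfl⟩
    · simp
    · exact ho.neg_one_pow
  have hinv := (ArithmeticFunction.sum_eq_iff_sum_mul_moebius_eq_on (R := ℚ)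
    (f := fun e => ((3 ^ k * e : ℕ) : ℚ) * (IrredSet (X ^ 3 - C τ * X : F[X]) 1 (3 ^ k * e)).ncard)
    (g := fun e => (((q : ℚ) ^ 3 ^ k) ^ e - ε ^ e) / 3)
    {m | ¬ 3 ∣ m} (fun a b hab hb ha => hb (ha.trans hab))).mp (by
      intro e he he3
      rw [← sum_reindex (fun d => (d : ℚ) * (IrredSet (X ^ 3 - C τ * X : F[X]) 1 d).ncard) k e he he3,
        main_sum q hq hchar τ hτ ε hε _ (by positivity), pow_mul, pow_mul, hε3]) m hm0 hm3
  simp only [hnm] at hinv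
  rw [Nat.sum_divisorsAntidiagonal (f := fun x y => ((ArithmeticFunction.moebius x : ℤ) : ℚ) *
    ((((q : ℚ) ^ 3 ^ k) ^ y - ε ^ y) / 3))] at hinv
  have hnq : (n : ℚ) ≠ 0 := by exact_mod_cast hn0
  have hmq : (m : ℚ) ≠ 0 := by exact_mod_cast hm0.ne'
  have hnm' : (n : ℚ) = 3 ^ k * m := by rw [← hnm]; push_cast; rfl
  have e : ∑ x ∈ m.divisors, ((ArithmeticFunction.moebius x : ℤ) : ℚ) *
      ((((q : ℚ) ^ 3 ^ k) ^ (m / x) - ε ^ (m / x)) / 3) =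
      (m * Ifun m ((q : ℚ) ^ 3 ^ k) - m * Ifun m ε) / 3 := by
    unfold Ifun
    field_simp
    rw [← Finset.sum_sub_distrib, Finset.mul_sum]
    refine Finset.sum_congr rfl fun x _ => ?_
    ring
  rw [e] at hinv
  apply mul_left_cancel₀ hnq
  rw [← hinv, hnm']
  push_cast
  field_simp
end
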